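/- Let (R,m) be a Noetherian local ring, let a,b be an R-regular sequence and let p ≥ 2 be an integer. Set x_1 = a^p, x_2 = b^p, y = ab^{p-1} and I = (x_1,x_2,y). Let V = R[X_1,X_2,Y] and φ : V → R(I) the presentation sending X_1 ↦ x_1 t, X_2 ↦ x_2 t, Y ↦ y t, with Q = ker φ. Then Q is minimally generated by: the two linear forms a^{p-1}Y − b^{p-1}X_1 and bY − aX_2, together with, for each 2 ≤ n ≤ p, the single form a^{p-n}Y^n − b^{p-n}X_1 X_2^{n-1}. In particular rt(I) = p. -/

import Mathlib

open MvPolynomial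

section Defs

variable {R : Type*} [CommRing R]

/-- The presentation of the Rees algebra of the ideal generated by `g`,
sending the `i`-th variable to `(g i) · t` inside `R[t]`. -/
noncomputable def reesPres {m : ℕ} (g : Fin m → R) :
    MvPolynomial (Fin m) R →ₐ[R] Polynomial R :=
  aeval fun i => Polynomial.C (g i) * Polynomial.X

/-- `Q`, the ideal of equations of the Rees algebra w.r.t. the generators `g`. -/
noncomputable def presKer {m : ℕ} (g : Fin m → R) : Ideal (MvPolynomial (Fin m) R) :=
  RingHom.ker (reesPres g)

/-- `Q⟨d⟩`, the subideal of `Q` generated by the homogeneous equations of degree at most `d`. -/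
noncomputable def presKerLe {m : ℕ} (g : Fin m → R) (d : ℕ) : Ideal (MvPolynomial (Fin m) R) :=
  Ideal.span {F | F ∈ presKer g ∧ ∃ k ≤ d, F.IsHomogeneous k}

/-- The claimed minimal generating set of the equations of the Rees algebra of
`I = (aᵖ, bᵖ, abᵖ⁻¹)`: the linear forms `aᵖ⁻¹Y − bᵖ⁻¹X₁`, `bY − aX₂` and, for
`2 ≤ n ≤ p`, the forms `aᵖ⁻ⁿYⁿ − bᵖ⁻ⁿX₁X₂ⁿ⁻¹`  (here `X₁ = X 0`, `X₂ = X 1`, `Y = X 2`). -/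
noncomputable def gens7 (a b : R) (p : ℕ) : Set (MvPolynomial (Fin 3) R) :=
  insert (C (a ^ (p - 1)) * X 2 - C (b ^ (p - 1)) * X 0)
    (insert (C b * X 2 - C a * X 1)
      ((fun n => C (a ^ (p - n)) * X 2 ^ n - C (b ^ (p - n)) * (X 0 * X 1 ^ (n - 1))) ''
        Set.Icc 2 p))

end Defs

/-! Let `J ⊆ V` be the ideal generated by the forms in `gens7 a b p`. The monomial `X₁ⁱX₂ʲYᵏ` of
degree `n` is sent to `aᵛbᵖⁿ⁻ᵛtⁿ` with `v = pi + k`. For a regular sequence `a, b` the syzygies of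
the elements `aᵛbᴺ⁻ᵛ` are generated by the obvious two-term ones, and each two-term syzygy between
monomials of equal degree already holds in `V ⧸ J`. Hence `Q = J`.

For minimality, set `X₁ = X₂ = 0`: the forms become `bY` and `aᵖ⁻ⁿYⁿ`, and `aᵖ⁻ⁿ ∉ (b, aᵖ⁻ⁿ⁺¹)`
prevents `aᵖ⁻ⁿYⁿ` from being generated by the others, while `bY − aX₂` is the only form that does
not vanish at `(0, 1, 0)`. The form of degree `p` becomes `Yᵖ`, whereas every equation of smaller
degree becomes zero modulo `(a, b)`; hence `rt(I) = p`. -/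

section RegularPair

variable {R : Type*} [CommRing R] {a b : R}

open scoped Pointwise in
theorem isRegular_pair_iff :
    RingTheory.Sequence.IsRegular R [a, b] ↔
      IsLeftRegular a ∧ (∀ c, a ∣ b * c → a ∣ c) ∧ Ideal.span {a, b} ≠ ⊤ := by
  have mem_smul_top (c : R) : c ∈ a • (⊤ : Submodule R R) ↔ a ∣ c := by
    simp [Submodule.mem_smul_pointwise_iff_exists, dvd_def, eq_comm]
  rw [RingTheory.Sequence.isRegular_iff, RingTheory.Sequence.isWeaklyRegular_cons_iff,
    RingTheory.Sequence.isWeaklyRegular_singleton_iff, and_assoc, ← isLeftRegular_iff]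
  refine and_congr_right fun _ => and_congr ?_ ?_
  · simp only [QuotSMulTop, isSMulRegular_quotient_iff_mem_of_smul_mem, mem_smul_top, smul_eq_mul]
  · rw [Ideal.ofList_cons, Ideal.ofList_singleton, ← Ideal.span_insert, smul_eq_mul,
      Ideal.mul_top, ne_comm]

theorem pow_dvd_of_pow_dvd_pow_mul (ha : IsLeftRegular a) (hab : ∀ c, a ∣ b * c → a ∣ c)
    (k l : ℕ) {c : R} (h : a ^ k ∣ b ^ l * c) : a ^ k ∣ c := by
  induction l with
  | zero => simpa using h
  | succ l ih =>
    refine ih ?_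
    rw [pow_succ', mul_assoc] at h
    generalize b ^ l * c = c' at h ⊢
    clear ih
    induction k generalizing c' with
    | zero => simp
    | succ k ih =>
      obtain ⟨c, rfl⟩ := hab c' ((dvd_pow_self a k.succ_ne_zero).trans h)
      obtain ⟨r, hr⟩ := h
      rw [pow_succ']
      exact mul_dvd_mul_left a (ih c ⟨r, ha (by linear_combination hr)⟩)

theorem pow_notMem_span_pair_pow_succ (ha : IsLeftRegular a) (hab : ∀ c, a ∣ b * c → a ∣ c)
    (htop : Ideal.span {a, b} ≠ ⊤) (s : ℕ) : a ^ s ∉ Ideal.span {b, a ^ (s + 1)} := by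
  intro h
  obtain ⟨x, y, hxy⟩ := Ideal.mem_span_pair.1 h
  obtain ⟨z, rfl⟩ : a ^ s ∣ x :=
    pow_dvd_of_pow_dvd_pow_mul ha hab s 1 ⟨1 - a * y, by linear_combination hxy⟩
  have hone : y * a + z * b = 1 := ha.pow s (by linear_combination hxy)
  exact htop ((Ideal.eq_top_iff_one _).2 (Ideal.mem_span_pair.2 ⟨y, z, hone⟩))

theorem pow_dvd_of_mul_add_eq_zero (ha : IsLeftRegular a) (hab : ∀ c, a ∣ b * c → a ∣ c)
    {u d l : ℕ} {c t : R} (ht : a ^ (u + d) ∣ t) (h : c * (a ^ u * b ^ l) + t = 0) :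
    a ^ d ∣ c := by
  obtain ⟨q, rfl⟩ := ht
  exact pow_dvd_of_pow_dvd_pow_mul ha hab d l ⟨-q, ha.pow u (by linear_combination h)⟩

/-- Regularity makes the coefficient at the smallest exponent divisible by the power of `a` needed
to move its term onto the next smallest exponent, which shortens the sum. -/
theorem sum_smul_eq_zero_of_sum_mul_pow_mul_pow_eq_zero {ι M : Type*} [AddCommGroup M] [Module R M]
    (ha : IsLeftRegular a) (hab : ∀ c, a ∣ b * c → a ∣ c) {N : ℕ} {e : ι → M} {v : ι → ℕ}
    {s : Finset ι} (he : ∀ i ∈ s, ∀ j ∈ s, v i ≤ v j →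
      a ^ (v j - v i) • e i = b ^ (v j - v i) • e j)
    (hle : ∀ i ∈ s, v i ≤ N) (htop : ∃ i ∈ s, v i = N) {c : ι → R}
    (hc : ∑ i ∈ s, c i * (a ^ v i * b ^ (N - v i)) = 0) : ∑ i ∈ s, c i • e i = 0 := by
  classical
  induction s using Finset.induction_on_min_value v generalizing c with
  | empty => simp
  | insert i s hi hmin ih =>
    simp only [Finset.forall_mem_insert] at he hle
    rw [Finset.sum_insert hi] at hc ⊢
    rcases s.eq_empty_or_nonempty with rfl | hs
    · have hvi : v i = N := by simpa using htop
      have hci : c i = 0 := ha.pow N (by simpa [hvi, mul_comm] using hc)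
      simp [hci]
    obtain ⟨j, hj, hjmin⟩ := s.exists_min_image v hs
    obtain ⟨d, hd⟩ := Nat.exists_eq_add_of_le (hmin j hj)
    obtain ⟨l, hl⟩ := Nat.exists_eq_add_of_le (hle.2 j hj)
    have htop' : ∃ k ∈ s, v k = N := by
      rcases (Finset.exists_mem_insert ..).1 htop with hiN | hk
      · exact ⟨j, hj, by omega⟩
      · exact hk
    have hrest : a ^ v j ∣ ∑ k ∈ s, c k * (a ^ v k * b ^ (N - v k)) :=
      Finset.dvd_sum fun k hk => ((pow_dvd_pow a (hjmin k hk)).mul_right _).mul_left _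
    obtain ⟨r, hr⟩ : a ^ d ∣ c i := pow_dvd_of_mul_add_eq_zero ha hab (hd ▸ hrest) hc
    have hei : c i • e i = (b ^ d * r) • e j := by
      have hij := he.1.2 j hj (hmin j hj)
      rw [hd, Nat.add_sub_cancel_left] at hij
      rw [hr, mul_comm, mul_smul, hij, smul_smul, mul_comm]
    have hshift := ih (fun k hk => (he.2 k hk).2) hle.2 htop' (c := c + Pi.single j (b ^ d * r)) (by
      simp only [Pi.add_apply, Pi.single_apply, add_mul, ite_mul, zero_mul,
        Finset.sum_add_distrib, Finset.sum_ite_eq', hj, if_true]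
      rw [hr, hl, hd, show v i + d + l - v i = d + l by omega] at hc
      rw [hl, hd, Nat.add_sub_cancel_left]
      linear_combination hc)
    simpa only [Pi.add_apply, Pi.single_apply, add_smul, ite_smul, zero_smul,
      Finset.sum_add_distrib, Finset.sum_ite_eq', hj, if_true, hei, add_comm] using hshift

end RegularPair

section Presentation

variable {R : Type*} [CommRing R] {m : ℕ} {g : Fin m → R} {F : MvPolynomial (Fin m) R}

theorem coeff_reesPres (n : ℕ) :
    (reesPres g F).coeff n = eval g (homogeneousComponent n F) := by
  induction F using MvPolynomial.induction_on' with
  | add p q hp hq => simp [hp, hq]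
  | monomial d r =>
    have hmonomial : reesPres g (monomial d r) =
        Polynomial.C (eval g (monomial d r)) * Polynomial.X ^ d.degree := by
      simp [reesPres, aeval_monomial, eval_monomial, mul_pow, Finsupp.prod, Finset.prod_mul_distrib,
        Finset.prod_pow_eq_pow_sum, Finsupp.degree_apply, mul_assoc]
    rw [hmonomial, Polynomial.coeff_C_mul_X_pow,
      homogeneousComponent_of_mem (isHomogeneous_monomial r rfl)]
    split_ifs <;> simp

theorem mem_presKer_iff :
    F ∈ presKer g ↔ ∀ n, eval g (homogeneousComponent n F) = 0 := by
  simp only [presKer, RingHom.mem_ker, Polynomial.ext_iff, ← coeff_reesPres, Polynomial.coeff_zero]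

theorem mem_presKer_of_isHomogeneous {n : ℕ} (hF : F.IsHomogeneous n) (h : eval g F = 0) :
    F ∈ presKer g := by
  refine mem_presKer_iff.2 fun k => ?_
  rw [homogeneousComponent_of_mem hF]
  split_ifs <;> simp [h]

theorem presKerLe_le_presKer (d : ℕ) : presKerLe g d ≤ presKer g :=
  Ideal.span_le.2 fun _ hF => hF.1

end Presentation

/-- The point `(x₁, x₂, y)` is a common zero of the forms in `gens7 a b p`; the first linear form is
the case `n = 1` of `binomial`. The images of `X₁, X₂, Y` in any quotient of `V` killing these forms
are such a point. -/
structure IsZeroOfGens {A : Type*} [CommSemiring A] (a b : A) (p : ℕ) (x₁ x₂ y : A) : Prop where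
  linear : b * y = a * x₂
  binomial : ∀ n, 1 ≤ n → n ≤ p → a ^ (p - n) * y ^ n = b ^ (p - n) * (x₁ * x₂ ^ (n - 1))

namespace IsZeroOfGens

variable {A : Type*} [CommSemiring A] {a b x₁ x₂ y : A} {p : ℕ}

theorem y_pow (h : IsZeroOfGens a b p x₁ x₂ y) (hp : 1 ≤ p) : y ^ p = x₁ * x₂ ^ (p - 1) := by
  simpa using h.binomial p hp le_rfl

theorem pow_mul_x₂ (h : IsZeroOfGens a b p x₁ x₂ y) (hp : 1 ≤ p) :
    a ^ p * x₂ = b ^ p * x₁ := by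
  have hy : a ^ (p - 1) * y = b ^ (p - 1) * x₁ := by simpa using h.binomial 1 le_rfl hp
  obtain ⟨q, rfl⟩ := Nat.exists_eq_add_of_le' hp
  rw [Nat.add_sub_cancel] at hy
  calc a ^ (q + 1) * x₂ = a ^ q * (a * x₂) := by ring
    _ = b * (a ^ q * y) := by rw [← h.linear]; ring
    _ = b ^ (q + 1) * x₁ := by rw [hy]; ring

theorem pow_mul_x₂_pow (h : IsZeroOfGens a b p x₁ x₂ y) (hp : 1 ≤ p) (i j k : ℕ) :
    a ^ (p * i + k) * x₂ ^ (i + j + k) = b ^ (p * i + k) * (x₁ ^ i * x₂ ^ j * y ^ k) := by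
  calc a ^ (p * i + k) * x₂ ^ (i + j + k) = (a ^ p * x₂) ^ i * x₂ ^ j * (a * x₂) ^ k := by ring
    _ = (b ^ p * x₁) ^ i * x₂ ^ j * (b * y) ^ k := by rw [h.pow_mul_x₂ hp, h.linear]
    _ = b ^ (p * i + k) * (x₁ ^ i * x₂ ^ j * y ^ k) := by ring

theorem pow_mul_x₂_pow_mul_y_pow (h : IsZeroOfGens a b p x₁ x₂ y) (hp : 1 ≤ p)
    {j k i' j' k' d : ℕ} (hdeg : j + k = i' + j' + k') (hd : k + d = p * i' + k') :
    a ^ d * (x₂ ^ j * y ^ k) = b ^ d * (x₁ ^ i' * x₂ ^ j' * y ^ k') := by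
  induction i' generalizing j k d with
  | zero =>
    obtain rfl : k' = k + d := by omega
    obtain rfl : j = j' + d := by omega
    calc a ^ d * (x₂ ^ (j' + d) * y ^ k) = x₂ ^ j' * y ^ k * (a * x₂) ^ d := by ring
      _ = b ^ d * (x₁ ^ 0 * x₂ ^ j' * y ^ (k + d)) := by rw [← h.linear]; ring
  | succ i' ih =>
    rcases Nat.eq_zero_or_pos k with rfl | hk
    · obtain rfl : j = i' + 1 + j' + k' := hdeg
      obtain rfl : d = p * (i' + 1) + k' := by omega
      simpa using h.pow_mul_x₂_pow hp (i' + 1) j' k'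
    -- Trade `yⁿ` for `x₁x₂ⁿ⁻¹` with the largest possible `n`, then cancel `x₁`.
    obtain ⟨n, hn1, hnp, l, rfl, hl⟩ :
        ∃ n, 1 ≤ n ∧ n ≤ p ∧ ∃ l, k = n + l ∧ l ≤ p * i' + k' := by
      refine ⟨min k p, by omega, min_le_right k p, k - min k p, by omega, ?_⟩
      rw [Nat.mul_succ] at hd
      omega
    obtain ⟨d', hd'⟩ := Nat.exists_eq_add_of_le hl
    obtain rfl : d = p - n + d' := by
      rw [Nat.mul_succ] at hd
      omega
    calc a ^ (p - n + d') * (x₂ ^ j * y ^ (n + l))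
        = a ^ d' * (x₂ ^ j * y ^ l) * (a ^ (p - n) * y ^ n) := by ring
      _ = b ^ (p - n) * x₁ * (a ^ d' * (x₂ ^ (j + (n - 1)) * y ^ l)) := by
        rw [h.binomial n hn1 hnp]; ring
      _ = b ^ (p - n + d') * (x₁ ^ (i' + 1) * x₂ ^ j' * y ^ k') := by
        rw [ih (by omega) hd'.symm]; ring

theorem pow_mul_x₁_pow_mul_x₂_pow_mul_y_pow (h : IsZeroOfGens a b p x₁ x₂ y) (hp : 1 ≤ p)
    {i j k j' k' d : ℕ} (hdeg : i + j + k = j' + k') (hd : p * i + k + d = k') :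
    a ^ d * (x₁ ^ i * x₂ ^ j * y ^ k) = b ^ d * (x₂ ^ j' * y ^ k') := by
  obtain ⟨q, rfl⟩ := Nat.exists_eq_add_of_le' hp
  have hyp : y ^ (q + 1) = x₁ * x₂ ^ q := h.y_pow hp
  obtain rfl : j = j' + q * i + d := by
    rw [Nat.succ_mul] at hd
    omega
  calc a ^ d * (x₁ ^ i * x₂ ^ (j' + q * i + d) * y ^ k)
      = (x₁ * x₂ ^ q) ^ i * x₂ ^ j' * (a * x₂) ^ d * y ^ k := by ring
    _ = (y ^ (q + 1)) ^ i * x₂ ^ j' * (b * y) ^ d * y ^ k := by rw [hyp, h.linear]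
    _ = b ^ d * (x₂ ^ j' * y ^ k') := by rw [← hd]; ring

theorem pow_mul_monomial (h : IsZeroOfGens a b p x₁ x₂ y) (hp : 1 ≤ p)
    {i j k i' j' k' d : ℕ} (hdeg : i + j + k = i' + j' + k')
    (hd : p * i + k + d = p * i' + k') :
    a ^ d * (x₁ ^ i * x₂ ^ j * y ^ k) = b ^ d * (x₁ ^ i' * x₂ ^ j' * y ^ k') := by
  rcases le_total i i' with hi | hi
  · obtain ⟨l, rfl⟩ := Nat.exists_eq_add_of_le hi
    have hcancel := h.pow_mul_x₂_pow_mul_y_pow hp (j := j) (k := k) (i' := l) (j' := j') (k' := k')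
      (d := d) (by omega) (by rw [Nat.mul_add] at hd; omega)
    calc a ^ d * (x₁ ^ i * x₂ ^ j * y ^ k) = x₁ ^ i * (a ^ d * (x₂ ^ j * y ^ k)) := by ring
      _ = b ^ d * (x₁ ^ (i + l) * x₂ ^ j' * y ^ k') := by rw [hcancel]; ring
  · obtain ⟨l, rfl⟩ := Nat.exists_eq_add_of_le hi
    have hcancel := h.pow_mul_x₁_pow_mul_x₂_pow_mul_y_pow hp (i := l) (j := j) (k := k) (j' := j')
      (k' := k') (d := d) (by omega) (by rw [Nat.mul_add] at hd; omega)
    calc a ^ d * (x₁ ^ (i' + l) * x₂ ^ j * y ^ k)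
        = x₁ ^ i' * (a ^ d * (x₁ ^ l * x₂ ^ j * y ^ k)) := by ring
      _ = b ^ d * (x₁ ^ i' * x₂ ^ j' * y ^ k') := by rw [hcancel]; ring

end IsZeroOfGens

section Generators

variable {R : Type*} [CommRing R] {a b : R} {p n : ℕ}

/-- The generators `x₁ = aᵖ`, `x₂ = bᵖ`, `y = abᵖ⁻¹` of `I`. -/
abbrev idealGens (a b : R) (p : ℕ) : Fin 3 → R := ![a ^ p, b ^ p, a * b ^ (p - 1)]

/-- The equation `bY − aX₂`. -/
noncomputable def linearForm (a b : R) : MvPolynomial (Fin 3) R := C b * X 2 - C a * X 1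

/-- The equation `aᵖ⁻ⁿYⁿ − bᵖ⁻ⁿX₁X₂ⁿ⁻¹`, meant for `1 ≤ n ≤ p`; for `n = 1` it is the other linear
form `aᵖ⁻¹Y − bᵖ⁻¹X₁` in `gens7 a b p`. -/
noncomputable def binomialForm (a b : R) (p n : ℕ) : MvPolynomial (Fin 3) R :=
  C (a ^ (p - n)) * X 2 ^ n - C (b ^ (p - n)) * (X 0 * X 1 ^ (n - 1))

theorem gens7_eq_insert_image (hp : 1 ≤ p) :
    gens7 a b p = insert (linearForm a b) (binomialForm a b p '' Set.Icc 1 p) := by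
  have hIcc : Set.Icc 1 p = insert 1 (Set.Icc 2 p) := by
    ext n
    simp only [Set.mem_Icc, Set.mem_insert_iff]
    omega
  rw [hIcc, Set.image_insert_eq, Set.insert_comm]
  simp [gens7, linearForm, binomialForm, Set.image]

theorem linearForm_mem_gens7 (a b : R) (p : ℕ) : linearForm a b ∈ gens7 a b p :=
  Set.mem_insert_of_mem _ (Set.mem_insert _ _)

theorem binomialForm_mem_gens7 (hn : 1 ≤ n) (hnp : n ≤ p) :
    binomialForm a b p n ∈ gens7 a b p := by
  rw [gens7_eq_insert_image (hn.trans hnp)]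
  exact Set.mem_insert_of_mem _ (Set.mem_image_of_mem _ ⟨hn, hnp⟩)

theorem isHomogeneous_linearForm (a b : R) : (linearForm a b).IsHomogeneous 1 :=
  (isHomogeneous_C_mul_X b 2).sub (isHomogeneous_C_mul_X a 1)

theorem isHomogeneous_binomialForm (a b : R) (p : ℕ) (hn : 1 ≤ n) :
    (binomialForm a b p n).IsHomogeneous n := by
  refine (isHomogeneous_C_mul_X_pow _ 2 n).sub (IsHomogeneous.C_mul ?_ _)
  simpa only [Nat.add_sub_cancel' hn] using
    (isHomogeneous_X R (0 : Fin 3)).mul (isHomogeneous_X_pow 1 (n - 1))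

theorem eval_linearForm (a b : R) (hp : 1 ≤ p) : eval (idealGens a b p) (linearForm a b) = 0 := by
  obtain ⟨q, rfl⟩ := Nat.exists_eq_add_of_le' hp
  calc eval (idealGens a b (q + 1)) (linearForm a b)
      = b * (a * b ^ q) - a * b ^ (q + 1) := by simp [linearForm]
    _ = 0 := by ring

theorem eval_binomialForm (a b : R) (hn : 1 ≤ n) (hnp : n ≤ p) :
    eval (idealGens a b p) (binomialForm a b p n) = 0 := by
  obtain ⟨k, rfl⟩ := Nat.exists_eq_add_of_le' hn
  obtain ⟨l, rfl⟩ := Nat.exists_eq_add_of_le hnp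
  have hsub : k + 1 + l - 1 = k + l := by omega
  calc eval (idealGens a b (k + 1 + l)) (binomialForm a b (k + 1 + l) (k + 1))
      = a ^ l * (a * b ^ (k + l)) ^ (k + 1) -
          b ^ l * (a ^ (k + 1 + l) * (b ^ (k + 1 + l)) ^ k) := by simp [binomialForm, hsub]
    _ = 0 := by ring

theorem mem_presKer_and_isHomogeneous_of_mem_gens7 (hp : 1 ≤ p) {f : MvPolynomial (Fin 3) R}
    (hf : f ∈ gens7 a b p) :
    f ∈ presKer (idealGens a b p) ∧ ∃ k ≤ p, f.IsHomogeneous k := by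
  rw [gens7_eq_insert_image hp] at hf
  rcases hf with rfl | ⟨n, ⟨hn, hnp⟩, rfl⟩
  · have hhom := isHomogeneous_linearForm a b
    exact ⟨mem_presKer_of_isHomogeneous hhom (eval_linearForm a b hp), 1, hp, hhom⟩
  · have hhom := isHomogeneous_binomialForm a b p hn
    exact ⟨mem_presKer_of_isHomogeneous hhom (eval_binomialForm a b hn hnp), n, hnp, hhom⟩

end Generators

section Generation

theorem eq_sum_smul_monomial_one_of_support_subset {R σ : Type*} [CommSemiring R]
    {F : MvPolynomial σ R} {s : Finset (σ →₀ ℕ)} (hs : F.support ⊆ s) :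
    F = ∑ d ∈ s, coeff d F • monomial d 1 := by
  simp only [smul_monomial, smul_eq_mul, mul_one]
  exact F.as_sum.trans (Finset.sum_subset hs fun d _ hd => by
    rw [notMem_support_iff.1 hd, monomial_zero])

variable {R : Type*} [CommRing R] {a b : R} {p n : ℕ}

theorem isZeroOfGens_mk (a b : R) (p : ℕ) :
    IsZeroOfGens (algebraMap R (MvPolynomial (Fin 3) R ⧸ Ideal.span (gens7 a b p)) a)
      (algebraMap R _ b) p (Ideal.Quotient.mk _ (X 0)) (Ideal.Quotient.mk _ (X 1))
      (Ideal.Quotient.mk _ (X 2)) where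
  linear := Ideal.Quotient.eq.2 (Ideal.subset_span (linearForm_mem_gens7 a b p))
  binomial n hn hnp := by
    have hmem := Ideal.subset_span (binomialForm_mem_gens7 (a := a) (b := b) hn hnp)
    simpa only [C_pow, map_mul, map_pow] using! Ideal.Quotient.eq.2 hmem

theorem monomial_one_eq_X_pow (d : Fin 3 →₀ ℕ) :
    monomial d (1 : R) = X 0 ^ d 0 * X 1 ^ d 1 * X 2 ^ d 2 := by
  rw [monomial_eq, Finsupp.prod_fintype _ _ (by simp), Fin.prod_univ_three, C_1, one_mul]

theorem eval_monomial_one (a b : R) (hp : 1 ≤ p) {d : Fin 3 →₀ ℕ} :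
    eval (idealGens a b p) (monomial d 1) =
      a ^ (p * d 0 + d 2) * b ^ (p * d.degree - (p * d 0 + d 2)) := by
  obtain ⟨q, rfl⟩ := Nat.exists_eq_add_of_le' hp
  have hexp : (q + 1) * d.degree - ((q + 1) * d 0 + d 2) = (q + 1) * d 1 + q * d 2 := by
    rw [Finsupp.degree_eq_sum, Fin.sum_univ_three]
    refine Nat.sub_eq_of_eq_add ?_
    ring
  calc eval (idealGens a b (q + 1)) (monomial d 1)
      = (a ^ (q + 1)) ^ d 0 * (b ^ (q + 1)) ^ d 1 * (a * b ^ q) ^ d 2 := by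
        simp [monomial_one_eq_X_pow]
    _ = a ^ ((q + 1) * d 0 + d 2) * b ^ ((q + 1) * d 1 + q * d 2) := by ring
    _ = _ := by rw [hexp]

theorem IsZeroOfGens.aeval_eq_zero {A : Type*} [CommRing A] [Algebra R A] {x₁ x₂ y : A}
    (h : IsZeroOfGens (algebraMap R A a) (algebraMap R A b) p x₁ x₂ y)
    (ha : IsLeftRegular a) (hab : ∀ c, a ∣ b * c → a ∣ c) (hp : 1 ≤ p)
    {F : MvPolynomial (Fin 3) R} (hF : F.IsHomogeneous n)
    (hF0 : eval (idealGens a b p) F = 0) : aeval ![x₁, x₂, y] F = 0 := by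
  let s : Finset (Fin 3 →₀ ℕ) := insert (Finsupp.single 0 n) F.support
  have hdeg : ∀ d ∈ s, d.degree = n := by
    simp only [s, Finset.forall_mem_insert, Finsupp.degree_single, true_and]
    exact fun d hd => (hF.degree_eq_sum_deg_support hd).symm
  have hsum : F = ∑ d ∈ s, coeff d F • monomial d 1 :=
    eq_sum_smul_monomial_one_of_support_subset (Finset.subset_insert _ _)
  rw [hsum, map_sum]
  simp only [map_smul]
  refine sum_smul_eq_zero_of_sum_mul_pow_mul_pow_eq_zero ha hab (N := p * n)
    (v := fun d => p * d 0 + d 2) ?_ ?_ ?_ ?_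
  · intro d hd d' hd' hle
    have hdd' := (hdeg d hd).trans (hdeg d' hd').symm
    simp only [Finsupp.degree_eq_sum, Fin.sum_univ_three] at hdd'
    simpa [Algebra.smul_def, monomial_one_eq_X_pow] using
      h.pow_mul_monomial hp hdd' (Nat.add_sub_cancel' hle)
  · intro d hd
    rw [← hdeg d hd, Finsupp.degree_eq_sum, Fin.sum_univ_three]
    nlinarith
  · exact ⟨Finsupp.single 0 n, Finset.mem_insert_self _ _, by simp⟩
  · rw [← hF0]
    conv_rhs => rw [hsum]
    rw [map_sum]
    refine Finset.sum_congr rfl fun d hd => ?_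
    rw [smul_eval, eval_monomial_one a b hp, hdeg d hd]

theorem mem_span_gens7_of_isHomogeneous (ha : IsLeftRegular a) (hab : ∀ c, a ∣ b * c → a ∣ c)
    (hp : 1 ≤ p) {F : MvPolynomial (Fin 3) R} (hF : F.IsHomogeneous n)
    (hF0 : eval (idealGens a b p) F = 0) : F ∈ Ideal.span (gens7 a b p) := by
  have hmk : Ideal.Quotient.mkₐ R (Ideal.span (gens7 a b p)) =
      aeval ![Ideal.Quotient.mk _ (X 0), Ideal.Quotient.mk _ (X 1), Ideal.Quotient.mk _ (X 2)] := by
    refine algHom_ext fun i => ?_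
    fin_cases i <;> simp
  rw [← Ideal.Quotient.eq_zero_iff_mem, ← Ideal.Quotient.mkₐ_eq_mk R, hmk]
  exact (isZeroOfGens_mk a b p).aeval_eq_zero ha hab hp hF hF0

theorem presKer_idealGens_eq_span (ha : IsLeftRegular a) (hab : ∀ c, a ∣ b * c → a ∣ c)
    (hp : 1 ≤ p) : presKer (idealGens a b p) = Ideal.span (gens7 a b p) := by
  refine le_antisymm (fun F hF => ?_) (Ideal.span_le.2 fun f hf =>
    (mem_presKer_and_isHomogeneous_of_mem_gens7 hp hf).1)
  rw [← sum_homogeneousComponent F]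
  exact sum_mem fun n _ => mem_span_gens7_of_isHomogeneous ha hab hp
    (homogeneousComponent_isHomogeneous n F) (mem_presKer_iff.1 hF n)

end Generation

section Minimality

variable {R : Type*} [CommRing R] {a b : R} {p n : ℕ}

/-- Reduction modulo `X₁`, `X₂` and the ideal `K` of coefficients, with `Y` becoming the variable of
`(R ⧸ K)[Y]`. -/
noncomputable def restrictY (K : Ideal R) : MvPolynomial (Fin 3) R →+* Polynomial (R ⧸ K) :=
  (aeval ![0, 0, Polynomial.X]).toRingHom.comp (map (Ideal.Quotient.mk K))

theorem restrictY_linearForm {K : Ideal R} (a : R) (hb : b ∈ K) :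
    restrictY K (linearForm a b) = 0 := by
  simp [restrictY, linearForm, Ideal.Quotient.eq_zero_iff_mem.2 hb]

theorem restrictY_binomialForm (K : Ideal R) (a b : R) (p n : ℕ) :
    restrictY K (binomialForm a b p n) =
      Polynomial.C (Ideal.Quotient.mk K (a ^ (p - n))) * Polynomial.X ^ n := by
  simp [restrictY, binomialForm]

theorem natDegree_restrictY_le (K : Ideal R) {F : MvPolynomial (Fin 3) R}
    (hF : F.IsHomogeneous n) : (restrictY K F).natDegree ≤ n := by
  have hY : ∀ i, ((![0, 0, Polynomial.X] : Fin 3 → Polynomial (R ⧸ K)) i).natDegree ≤ 1 := by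
    simp [Fin.forall_fin_succ, Polynomial.natDegree_X_le]
  simpa [restrictY] using aeval_natDegree_le _ (hF.map (Ideal.Quotient.mk K)).totalDegree_le _ hY

theorem X_pow_dvd_restrictY_of_mem_gens7 {K : Ideal R} (hp : 1 ≤ p) (hnp : n ≤ p) (hb : b ∈ K)
    (ha : a ^ (p - n + 1) ∈ K) {f : MvPolynomial (Fin 3) R} (hf : f ∈ gens7 a b p) :
    f = binomialForm a b p n ∨ Polynomial.X ^ (n + 1) ∣ restrictY K f := by
  rw [gens7_eq_insert_image hp] at hf
  rcases hf with rfl | ⟨m, -, rfl⟩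
  · exact .inr (restrictY_linearForm a hb ▸ dvd_zero _)
  rw [restrictY_binomialForm]
  rcases lt_trichotomy m n with hmn | rfl | hmn
  · have hmem : a ^ (p - m) ∈ K := K.mem_of_dvd (pow_dvd_pow a (by omega)) ha
    simp [Ideal.Quotient.eq_zero_iff_mem.2 hmem]
  · exact .inl rfl
  · exact .inr ((pow_dvd_pow _ hmn).mul_left _)

theorem binomialForm_notMem_span (ha : IsLeftRegular a) (hab : ∀ c, a ∣ b * c → a ∣ c)
    (htop : Ideal.span {a, b} ≠ ⊤) {S : Set (MvPolynomial (Fin 3) R)}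
    (hS : ∀ f ∈ S, Polynomial.X ^ (n + 1) ∣ restrictY (Ideal.span {b, a ^ (p - n + 1)}) f) :
    binomialForm a b p n ∉ Ideal.span S := by
  intro hmem
  set K := Ideal.span {b, a ^ (p - n + 1)}
  have hle : Ideal.span S ≤ (Ideal.span {Polynomial.X ^ (n + 1)}).comap (restrictY K) :=
    Ideal.span_le.2 fun f hf => Ideal.mem_span_singleton.2 (hS f hf)
  have hdvd := Ideal.mem_span_singleton.1 (hle hmem)
  have hcoeff := Polynomial.X_pow_dvd_iff.1 hdvd n n.lt_succ_self
  rw [restrictY_binomialForm, Polynomial.coeff_C_mul_X_pow, if_pos rfl,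
    Ideal.Quotient.eq_zero_iff_mem] at hcoeff
  exact pow_notMem_span_pair_pow_succ ha hab htop (p - n) hcoeff

theorem linearForm_notMem_span_diff [Nontrivial R] (ha : IsLeftRegular a) (hp : 1 ≤ p) :
    linearForm a b ∉ Ideal.span (gens7 a b p \ {linearForm a b}) := by
  have hle : Ideal.span (gens7 a b p \ {linearForm a b}) ≤
      RingHom.ker (eval ![(0 : R), 1, 0]) := by
    rw [gens7_eq_insert_image hp, Ideal.span_le]
    rintro f ⟨rfl | ⟨n, ⟨hn, -⟩, rfl⟩, hne⟩
    · exact absurd rfl hne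
    · simp [RingHom.mem_ker, binomialForm, zero_pow (Nat.one_le_iff_ne_zero.1 hn)]
  intro hmem
  have ha0 : a = 0 := by simpa [RingHom.mem_ker, linearForm] using hle hmem
  exact ha.ne_zero ha0

theorem notMem_span_gens7_diff (ha : IsLeftRegular a) (hab : ∀ c, a ∣ b * c → a ∣ c)
    (htop : Ideal.span {a, b} ≠ ⊤) (hp : 1 ≤ p) {f : MvPolynomial (Fin 3) R}
    (hf : f ∈ gens7 a b p) : f ∉ Ideal.span (gens7 a b p \ {f}) := by
  have hf' := hf
  rw [gens7_eq_insert_image hp] at hf'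
  rcases hf' with rfl | ⟨n, ⟨-, hnp⟩, rfl⟩
  · have : Nontrivial R := (Submodule.nontrivial_iff R).1 ⟨_, _, htop⟩
    exact linearForm_notMem_span_diff ha hp
  · refine binomialForm_notMem_span ha hab htop fun f ⟨hf, hne⟩ => ?_
    exact (X_pow_dvd_restrictY_of_mem_gens7 hp hnp (Ideal.mem_span_pair.2 ⟨1, 0, by simp⟩)
      (Ideal.mem_span_pair.2 ⟨0, 1, by simp⟩) hf).resolve_left hne

theorem le_of_presKer_eq_presKerLe (ha : IsLeftRegular a) (hab : ∀ c, a ∣ b * c → a ∣ c)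
    (htop : Ideal.span {a, b} ≠ ⊤) (hp : 1 ≤ p) {N : ℕ}
    (hN : presKer (idealGens a b p) = presKerLe (idealGens a b p) N) : p ≤ N := by
  by_contra! hlt
  set K := Ideal.span {b, a ^ (p - p + 1)}
  have hb : b ∈ K := Ideal.mem_span_pair.2 ⟨1, 0, by simp⟩
  have haK : a ^ (p - p + 1) ∈ K := Ideal.mem_span_pair.2 ⟨0, 1, by simp⟩
  have hdvd : Ideal.span (gens7 a b p) ≤
      (Ideal.span {Polynomial.X ^ p}).comap (restrictY K) := by
    refine Ideal.span_le.2 fun f hf => Ideal.mem_span_singleton.2 ?_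
    rcases X_pow_dvd_restrictY_of_mem_gens7 hp le_rfl hb haK hf with rfl | hXp
    · exact restrictY_binomialForm K a b p p ▸ dvd_mul_left _ _
    · exact (pow_dvd_pow _ p.le_succ).trans hXp
  have hmem : binomialForm a b p p ∈ presKerLe (idealGens a b p) N :=
    hN ▸ (mem_presKer_and_isHomogeneous_of_mem_gens7 hp (binomialForm_mem_gens7 hp le_rfl)).1
  refine binomialForm_notMem_span ha hab htop ?_ hmem
  rintro F ⟨hF, k, hk, hFk⟩
  rw [presKer_idealGens_eq_span ha hab hp] at hF
  have hzero : restrictY K F = 0 := by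
    ext i
    rcases lt_or_ge i p with hip | hpi
    · exact Polynomial.X_pow_dvd_iff.1 (Ideal.mem_span_singleton.1 (hdvd hF)) i hip
    · refine Polynomial.coeff_eq_zero_of_natDegree_lt ?_
      exact (natDegree_restrictY_le K hFk).trans_lt (by omega)
  exact hzero ▸ dvd_zero _

end Minimality

theorem statement7_general {R : Type*} [CommRing R]
    (a b : R) (hreg : RingTheory.Sequence.IsRegular R [a, b])
    (p : ℕ) (hp : 1 ≤ p) :
    presKer ![a ^ p, b ^ p, a * b ^ (p - 1)] = Ideal.span (gens7 a b p) ∧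
    (∀ f ∈ gens7 a b p,
      presKer ![a ^ p, b ^ p, a * b ^ (p - 1)] ≠ Ideal.span (gens7 a b p \ {f})) ∧
    IsLeast {N : ℕ | 1 ≤ N ∧
      presKer ![a ^ p, b ^ p, a * b ^ (p - 1)]
        = presKerLe ![a ^ p, b ^ p, a * b ^ (p - 1)] N} p := by
  obtain ⟨ha, hab, htop⟩ := isRegular_pair_iff.1 hreg
  have hker := presKer_idealGens_eq_span ha hab hp
  refine ⟨hker, fun f hf heq => ?_, ⟨hp, ?_⟩, fun N hN => ?_⟩
  · refine notMem_span_gens7_diff ha hab htop hp hf ?_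
    rw [← heq, hker]
    exact Ideal.subset_span hf
  · refine le_antisymm (hker.trans_le (Ideal.span_mono fun f hf => ?_)) (presKerLe_le_presKer p)
    exact mem_presKer_and_isHomogeneous_of_mem_gens7 hp hf
  · exact le_of_presKer_eq_presKerLe ha hab htop hp hN.2

/-- For a regular sequence `a,b` in a Noetherian local ring and `p ≥ 2`, the ideal of
equations of the Rees algebra of `I = (aᵖ, bᵖ, abᵖ⁻¹)` is minimally generated by the
forms in `gens7 a b p`; in particular `rt(I) = p`. -/
theorem statement7 {R : Type*} [CommRing R] [IsNoetherianRing R] [IsLocalRing R]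
    (a b : R) (hreg : RingTheory.Sequence.IsRegular R [a, b])
    (p : ℕ) (hp : 2 ≤ p) :
    presKer ![a ^ p, b ^ p, a * b ^ (p - 1)] = Ideal.span (gens7 a b p) ∧
    (∀ f ∈ gens7 a b p,
      presKer ![a ^ p, b ^ p, a * b ^ (p - 1)] ≠ Ideal.span (gens7 a b p \ {f})) ∧
    IsLeast {N : ℕ | 1 ≤ N ∧
      presKer ![a ^ p, b ^ p, a * b ^ (p - 1)]
        = presKerLe ![a ^ p, b ^ p, a * b ^ (p - 1)] N} p := by
  exact statement7_general a b hreg p (one_le_two.trans hp)
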